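/- arXiv:1704.07654 — 4 statements merged into one kernel-verified Lean document; each statement's English description precedes it below -/
import Mathlib

section
/- Let X be an irreducible, Jacobson, catenary, locally Noetherian scheme of finite dimension. Then dim U = dim X for every non-empty open subset U of X; equivalently, the local dimension function x ↦ dim_x X is constant on X. -/
open AlgebraicGeometry TopologicalSpace Order
open TopologicalSpace Order

/-- The local dimension of a topological space at a point: the infimum over open
neighbourhoods `U` of `x` of the Krull dimension of `U`. -/
noncomputable def localDim (X : Type*) [TopologicalSpace X] (x : X) : WithBot ℕ∞ :=
  ⨅ U : {U : Set X // IsOpen U ∧ x ∈ U}, topologicalKrullDim ↥U.1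
/-- A chain of irreducible closed subsets is saturated (maximal with given endpoints)
if each step is a covering relation. -/
def IsSaturatedChain {X : Type*} [TopologicalSpace X]
    (p : LTSeries (IrreducibleCloseds X)) : Prop :=
  ∀ i : Fin p.length, p.toFun i.castSucc ⋖ p.toFun i.succ

/-- A topological space is catenary if any two saturated chains of irreducible closed
subsets with the same endpoints have the same length. -/
def IsCatenarySpace (X : Type*) [TopologicalSpace X] : Prop :=
  ∀ p q : LTSeries (IrreducibleCloseds X), p.head = q.head → p.last = q.last →
    IsSaturatedChain p → IsSaturatedChain q → p.length = q.length

/-- A maximal chain of irreducible closed subsets: saturated, starting at a minimal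
irreducible closed subset and ending at a maximal one. -/
def IsMaximalChain {X : Type*} [TopologicalSpace X]
    (p : LTSeries (IrreducibleCloseds X)) : Prop :=
  IsSaturatedChain p ∧ IsMin p.head ∧ IsMax p.last

/-- The codimension `codim(Y, Z)`: the supremum of lengths of chains of irreducible
closed subsets from `Y` to `Z`. -/
noncomputable def relCodim {X : Type*} [TopologicalSpace X]
    (Y Z : IrreducibleCloseds X) : ℕ∞ :=
  ⨆ p : {p : LTSeries (IrreducibleCloseds X) // p.head = Y ∧ p.last = Z},
    (p.1.length : ℕ∞)

/-- The dimension of the irreducible closed subset `Y`: the supremum of lengths of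
chains of irreducible closed subsets contained in `Y`. -/
noncomputable def chainDim {X : Type*} [TopologicalSpace X]
    (Y : IrreducibleCloseds X) : ℕ∞ :=
  ⨆ p : {p : LTSeries (IrreducibleCloseds X) // p.last ≤ Y}, (p.1.length : ℕ∞)

/-- The dimension of `X`: the supremum of lengths of chains of irreducible closed
subsets of `X`. -/
noncomputable def spaceDim (X : Type*) [TopologicalSpace X] : ℕ∞ :=
  ⨆ p : LTSeries (IrreducibleCloseds X), (p.length : ℕ∞)

/-- The codimension of `Y` in the ambient space: the supremum of lengths of chains of
irreducible closed subsets starting at `Y`. -/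
noncomputable def codimAbove {X : Type*} [TopologicalSpace X]
    (Y : IrreducibleCloseds X) : ℕ∞ :=
  ⨆ p : {p : LTSeries (IrreducibleCloseds X) // p.head = Y}, (p.1.length : ℕ∞)

/-- A topological space is equicodimensional if all minimal irreducible closed subsets
have the same codimension. -/
def IsEquicodim (X : Type*) [TopologicalSpace X] : Prop :=
  ∀ Y Y' : IrreducibleCloseds X, IsMin Y → IsMin Y' → codimAbove Y = codimAbove Y'

theorem Order.exists_gt_of_add_one_le_coheight {α : Type*} [Preorder α] {a : α} {n : ℕ}
    (h : ((n + 1 : ℕ) : ℕ∞) ≤ coheight a) : ∃ b, a < b ∧ (n : ℕ∞) ≤ coheight b := by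
  by_contra! H
  have h₁ : coheight a ≤ n := coheight_le_coe_iff.2 H
  have h₂ := h.trans h₁
  norm_cast at h₂
  omega

namespace PrimeSpectrum

variable {R : Type*} [CommRing R] [IsNoetherianRing R]

/-- In a Noetherian ring, if there is a prime strictly between `p` and `s`, and `f ∉ p`, then
there is a prime strictly between `p` and `s` which does not contain `f`. -/
theorem exists_between_notMem {p r s : PrimeSpectrum R} (hpr : p < r) (hrs : r < s) {f : R}
    (hf : f ∉ p.asIdeal) : ∃ q : PrimeSpectrum R, p < q ∧ q < s ∧ f ∉ q.asIdeal := by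
  have no_between {x : R} {a b : PrimeSpectrum R} (hpa : p < a) (hab : a < b)
      (hb : b.asIdeal ∈ (p.asIdeal ⊔ Ideal.span {x}).minimalPrimes) : False := by
    have hxb : x ∈ b.asIdeal := hb.1.2 (Ideal.mem_sup_right (Ideal.mem_span_singleton_self x))
    obtain ⟨q, hxq, hpq, hqb⟩ := exist_mem_one_of_mem_two hpa hab hxb
    exact hqb.not_ge (hb.2 ⟨q.2, sup_le hpq.le (by simpa [Ideal.span_le] using hxq)⟩ hqb.le)
  let T : Set (Ideal R) := insert p.asIdeal (p.asIdeal ⊔ Ideal.span {f}).minimalPrimes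
  have hT : T.Finite := (Ideal.finite_minimalPrimes_of_isNoetherianRing R _).insert _
  have hs : ¬ ((s.asIdeal : Set R) ⊆ ⋃ I ∈ T, I) := by
    intro h
    obtain ⟨I, (rfl | hI), hle⟩ := (Ideal.subset_union_prime_finite (f := id) hT ⊤ ⊤
      (by rintro I (rfl | hI) _ _; exacts [p.2, hI.1.1])).1 h
    · exact (hpr.trans hrs).not_ge hle
    · exact no_between (b := ⟨I, hI.1.1⟩) hpr (hrs.trans_le hle) hI
  obtain ⟨x, hxs, hxT⟩ := Set.not_subset.1 hs
  simp only [Set.mem_iUnion, not_exists] at hxT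
  have hxp : x ∉ p.asIdeal := hxT _ (Set.mem_insert _ _)
  obtain ⟨q, hq, hqs⟩ := Ideal.exists_minimalPrimes_le (J := s.asIdeal)
    (I := p.asIdeal ⊔ Ideal.span {x})
    (sup_le (hpr.trans hrs).le (by simpa [Ideal.span_le] using hxs))
  have hxq : x ∈ q := hq.1.2 (Ideal.mem_sup_right (Ideal.mem_span_singleton_self x))
  have hpq : p.asIdeal ≤ q := le_sup_left.trans hq.1.2
  refine ⟨⟨q, hq.1.1⟩, lt_of_le_of_ne hpq ?_, lt_of_le_of_ne hqs ?_, fun hfq ↦ ?_⟩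
  · exact fun h ↦ hxp (by rw [h]; exact hxq)
  · rintro rfl
    exact no_between hpr hrs hq
  · have := hq.1.1
    obtain ⟨a, ha, haq⟩ := Ideal.exists_minimalPrimes_le (J := q)
      (I := p.asIdeal ⊔ Ideal.span {f}) (sup_le hpq (by simpa [Ideal.span_le] using hfq))
    have hfa : f ∈ a := ha.1.2 (Ideal.mem_sup_right (Ideal.mem_span_singleton_self f))
    have hxa : x ∉ a := hxT _ (Set.mem_insert_of_mem _ ha)
    refine no_between (a := ⟨a, ha.1.1⟩) (b := ⟨q, hq.1.1⟩)
      (lt_of_le_of_ne (le_sup_left.trans ha.1.2) ?_) (lt_of_le_of_ne haq ?_) hq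
    · exact fun h ↦ hf (by rw [h]; exact hfa)
    · exact fun h ↦ hxa (by rw [show a = q from congrArg asIdeal h]; exact hxq)

theorem exists_lt_height_add_le_of_notMem {f : R} {s : PrimeSpectrum R} (n : ℕ)
    (r : Set.Iic s) (hf : f ∉ r.1.asIdeal) (hr : ((n + 1 : ℕ) : ℕ∞) ≤ coheight r) :
    ∃ q < s, f ∉ q.asIdeal ∧ height r.1 + n ≤ height q := by
  induction n generalizing r with
  | zero =>
    obtain ⟨b, hrb, -⟩ := exists_gt_of_add_one_le_coheight hr
    exact ⟨r, lt_of_lt_of_le hrb b.2, hf, by simp⟩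
  | succ n ih =>
    obtain ⟨b, hrb, hb⟩ := exists_gt_of_add_one_le_coheight hr
    obtain ⟨c, hbc, hc⟩ := exists_gt_of_add_one_le_coheight hb
    obtain ⟨t, hrt, htc, hft⟩ := exists_between_notMem
      (show r.1 < b.1 from hrb) (show b.1 < c.1 from hbc) hf
    have hts : t ∈ Set.Iic s := htc.le.trans c.2
    obtain ⟨q, hqs, hfq, hq⟩ := ih ⟨t, hts⟩ hft <| by
      have h := coheight_add_one_le (show (⟨t, hts⟩ : Set.Iic s) < c from htc)
      exact le_trans (by push_cast; gcongr) h
    refine ⟨q, hqs, hfq, le_trans ?_ hq⟩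
    have h := height_add_one_le hrt
    calc height r.1 + ((n + 1 : ℕ) : ℕ∞) = height r.1 + 1 + n := by push_cast; ring
      _ ≤ _ := by gcongr

/-- In a Noetherian ring with irreducible spectrum, below any prime `s` of height at least `n + 1`
there is a prime of height at least `n` in a given non-empty open subset. -/
theorem exists_lt_le_height_mem [IrreducibleSpace (PrimeSpectrum R)] {s : PrimeSpectrum R} {n : ℕ}
    (hs : ((n + 1 : ℕ) : ℕ∞) ≤ height s) {W : Set (PrimeSpectrum R)} (hW : IsOpen W)
    (hW' : W.Nonempty) : ∃ q < s, q ∈ W ∧ (n : ℕ∞) ≤ height q := by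
  obtain ⟨w, hw⟩ := hW'
  obtain ⟨_, ⟨f, rfl⟩, hwf, hfW⟩ := isTopologicalBasis_basic_opens.exists_subset_of_mem_open hw hW
  let η : PrimeSpectrum R := genericPoint (PrimeSpectrum R)
  have hη (p : PrimeSpectrum R) : η ≤ p := (le_iff_specializes _ _).2 (genericPoint_specializes p)
  have hfη : f ∉ η.asIdeal := fun h ↦ hwf (hη w h)
  have hco : ((n + 1 : ℕ) : ℕ∞) ≤ coheight (⟨η, hη s⟩ : Set.Iic s) := by
    have h : ((height s : ℕ∞) : WithBot ℕ∞) ≤ coheight (⟨η, hη s⟩ : Set.Iic s) := by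
      rw [height_eq_krullDim_Iic]
      refine iSup_le fun l ↦ ?_
      exact_mod_cast length_le_coheight (hη l.head.1 : (⟨η, hη s⟩ : Set.Iic s) ≤ l.head)
    exact hs.trans (by exact_mod_cast h)
  obtain ⟨q, hqs, hfq, hq⟩ := exists_lt_height_add_le_of_notMem n ⟨η, hη s⟩ hfη hco
  exact ⟨q, hqs, hfW hfq, le_trans le_add_self hq⟩

end PrimeSpectrum

namespace TopologicalSpace.IrreducibleCloseds

/-- The closure of a point as an irreducible closed subset. -/
def ofPoint {X : Type*} [TopologicalSpace X] (x : X) : IrreducibleCloseds X where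
  carrier := closure {x}
  isIrreducible' := isIrreducible_singleton.closure
  isClosed' := isClosed_closure

theorem map_ofPoint {X Y : Type*} [TopologicalSpace X] [TopologicalSpace Y] {f : X → Y}
    (hf : Continuous f) (x : X) : map f hf (ofPoint x) = ofPoint (f x) := by
  ext : 1
  simp [ofPoint, closure_image_closure hf]

theorem coheight_ofPoint_apply {X Y : Type*} [TopologicalSpace X] [TopologicalSpace Y] {f : X → Y}
    (hf : Topology.IsOpenEmbedding f) (x : X) :
    coheight (ofPoint (f x)) = coheight (ofPoint x) := by
  rw [← map_ofPoint hf.continuous, hf.coheight_map]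

theorem coheight_ofPoint_primeSpectrum {R : Type*} [CommRing R] (p : PrimeSpectrum R) :
    coheight (ofPoint p) = height p :=
  height_orderIso (PrimeSpectrum.pointsEquivIrreducibleCloseds R) p

end TopologicalSpace.IrreducibleCloseds

open TopologicalSpace.IrreducibleCloseds in
/-- In an irreducible Jacobson space which is locally the spectrum of a Noetherian ring, every
non-empty open subset has full dimension. -/
theorem topologicalKrullDim_eq_of_isOpen {X : Type*} [TopologicalSpace X] [IrreducibleSpace X]
    [JacobsonSpace X] [QuasiSober X]
    (hX : ∀ x : X, ∃ (R : Type*) (_ : CommRing R) (_ : IsNoetherianRing R)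
      (f : PrimeSpectrum R → X), Topology.IsOpenEmbedding f ∧ x ∈ Set.range f)
    {U : Set X} (hU : IsOpen U) (hU' : U.Nonempty) :
    topologicalKrullDim U = topologicalKrullDim X := by
  refine (topologicalKrullDim_subspace_le X U).antisymm ?_
  have key (Z : IrreducibleCloseds X) (n : ℕ) (hn : (n : ℕ∞) ≤ coheight Z) :
      ∃ z : U, (n : ℕ∞) ≤ coheight (ofPoint z) := by
    cases n with
    | zero => exact ⟨⟨_, hU'.some_mem⟩, by simp⟩
    | succ n =>
      obtain ⟨x, hx⟩ := QuasiSober.sober Z.isIrreducible Z.isClosed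
      obtain rfl : Z = ofPoint x := IrreducibleCloseds.ext hx.symm
      obtain ⟨R, _, _, f, hf, s, rfl⟩ := hX x
      rw [coheight_ofPoint_apply hf, coheight_ofPoint_primeSpectrum] at hn
      have : Nonempty (PrimeSpectrum R) := ⟨s⟩
      have hpre : PreirreducibleSpace (PrimeSpectrum R) := ⟨by
        simpa using (PreirreducibleSpace.isPreirreducible_univ (X := X)).preimage hf⟩
      have : IrreducibleSpace (PrimeSpectrum R) := ⟨‹_›⟩
      have hne : (f ⁻¹' U).Nonempty := by
        obtain ⟨_, hyU, y, rfl⟩ := nonempty_preirreducible_inter hU hf.isOpen_range hU'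
          ⟨_, Set.mem_range_self s⟩
        exact ⟨y, hyU⟩
      obtain ⟨q, hqs, hqU, hq⟩ :=
        PrimeSpectrum.exists_lt_le_height_mem hn (hU.preimage hf.continuous) hne
      obtain ⟨z, ⟨hzq, hzU⟩, hz⟩ := nonempty_inter_closedPoints
        (Z := closure {f q} ∩ U) ⟨f q, subset_closure rfl, hqU⟩
        (isClosed_closure.isLocallyClosed.inter hU.isLocallyClosed)
      refine ⟨⟨z, hzU⟩, ?_⟩
      rw [← coheight_ofPoint_apply hU.isOpenEmbedding_subtypeVal]
      have hlt : ofPoint z < ofPoint (f q) := by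
        refine lt_of_le_not_ge (closure_minimal (Set.singleton_subset_iff.2 hzq)
          isClosed_closure) fun hle ↦ ?_
        have hqz : f q = z := by
          have h : f q ∈ closure {z} := hle (subset_closure rfl)
          rwa [(mem_closedPoints_iff.1 hz).closure_eq] at h
        have hsp : f q ⤳ f s := ((PrimeSpectrum.le_iff_specializes _ _).1 hqs.le).map hf.continuous
        have h : f s ∈ closure {f q} := hsp.mem_closure
        rw [hqz, (mem_closedPoints_iff.1 hz).closure_eq, ← hqz] at h
        exact hqs.ne (hf.injective h).symm
      refine le_trans ?_ (coheight_add_one_le hlt)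
      rw [coheight_ofPoint_apply hf, coheight_ofPoint_primeSpectrum]
      push_cast
      gcongr
  unfold topologicalKrullDim
  refine iSup_le fun l ↦ ?_
  obtain ⟨z, hz⟩ := key l.head l.length length_le_coheight_head
  exact le_trans (by exact_mod_cast hz) (coheight_le_krullDim (ofPoint z))

theorem dim_open_eq_dim_of_irreducible_jacobson_catenary (X : Scheme)
    [IrreducibleSpace X] (hJ : JacobsonSpace X) (hcat : IsCatenarySpace X)
    [IsLocallyNoetherian X] (d : ℕ) (hd : topologicalKrullDim X = (d : WithBot ℕ∞)) :
    (∀ U : Set X, IsOpen U → U.Nonempty →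
      topologicalKrullDim ↥U = topologicalKrullDim X) ∧
    ∀ x : X, localDim X x = topologicalKrullDim X := by
  have hopen : ∀ U : Set X, IsOpen U → U.Nonempty →
      topologicalKrullDim ↥U = topologicalKrullDim X := fun U hU hU' ↦ by
    refine topologicalKrullDim_eq_of_isOpen (fun x ↦ ?_) hU hU'
    obtain ⟨V, hV, hxV, -⟩ := exists_isAffineOpen_mem_and_subset (U := ⊤) (Opens.mem_top x)
    refine ⟨Γ(X, V), inferInstance, IsLocallyNoetherian.component_noetherian ⟨V, hV⟩,
      hV.fromSpec, hV.fromSpec.isOpenEmbedding, 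
      hV.range_fromSpec.ge hxV⟩
  refine ⟨hopen, fun x ↦ ?_⟩
  have : Nonempty {U : Set X // IsOpen U ∧ x ∈ U} := ⟨⟨Set.univ, isOpen_univ, trivial⟩⟩
  exact (iInf_congr fun U : {U : Set X // IsOpen U ∧ x ∈ U} ↦ hopen U.1 U.2.1 ⟨x, U.2.2⟩).trans ciInf_const
end

section
/- Let A be a Noetherian local ring which is a G-ring, with completion Â. Let p be a minimal prime of A and q a minimal prime of Â lying over p. Then the length of the Artinian local ring Â_q equals the length of A_p. -/
/-- The length of a ring as a module over itself, realized as the Krull dimension of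
its lattice of ideals (submodules). -/
noncomputable def ringLength (R : Type*) [CommRing R] : WithBot ℕ∞ :=
  Order.krullDim (Submodule R R)
open IsLocalRing TensorProduct in
/-- A (Noetherian) local ring is regular if its Krull dimension equals the dimension of
its cotangent space (embedding dimension). -/
def IsRegularLocal (A : Type u) [CommRing A] [IsLocalRing A] : Prop :=
  ringKrullDim A =
    (Module.finrank (IsLocalRing.ResidueField A) (IsLocalRing.CotangentSpace A) :
      WithBot ℕ∞)

/-- A commutative ring is regular if all of its localizations at primes are regular
local rings. -/
def IsRegularCommRing (B : Type u) [CommRing B] : Prop :=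
  ∀ (P : Ideal B) [P.IsPrime], IsRegularLocal (Localization.AtPrime P)

/-- A `k`-algebra `B` over a field `k` is geometrically regular if `K ⊗[k] B` is
regular for every finite field extension `K` of `k`. -/
def IsGeometricallyRegular (k B : Type u) [Field k] [CommRing B] [Algebra k B] : Prop :=
  ∀ (K : Type u) [Field K] [Algebra k K], Module.Finite k K →
    IsRegularCommRing (TensorProduct k K B)

/-- The residue field of a commutative ring at a prime ideal. -/
noncomputable abbrev primeResidueField (A : Type u) [CommRing A] (p : Ideal A)
    [p.IsPrime] : Type u :=
  IsLocalRing.ResidueField (Localization.AtPrime p)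

/-- A Noetherian local ring is a G-ring if for every prime `p`, the formal fibre
`Â ⊗_A κ(p)` of the completion `Â` over `p` is geometrically regular over `κ(p)`. -/
def IsGRing (A : Type u) [CommRing A] [IsLocalRing A] : Prop :=
  ∀ (p : Ideal A) [p.IsPrime],
    IsGeometricallyRegular (primeResidueField A p)
      (TensorProduct A (primeResidueField A p)
        (AdicCompletion (IsLocalRing.maximalIdeal A) A))

open IsLocalRing TensorProduct

theorem AdicCompletion.isNoetherianRing {R : Type*} [CommRing R] [IsNoetherianRing R]
    (I : Ideal R) : IsNoetherianRing (AdicCompletion I R) := by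
  obtain ⟨n, v, hv⟩ := Submodule.fg_iff_exists_fin_generating_family.mp
    (IsNoetherian.noetherian I)
  let J := MvPolynomial.idealOfVars (Fin n) R
  let f : MvPolynomial (Fin n) R →+* R := (MvPolynomial.aeval v).toRingHom
  have hJ : J.map f = I := by
    simp only [J, Ideal.map_span, ← Set.range_comp]
    rw [← hv]
    congr 2
    ext i
    simp [f]
  have hle (k : ℕ) : J ^ k ≤ (I ^ k).comap f := by
    rw [← Ideal.map_le_iff_le_comap, Ideal.map_pow, hJ]
  let F : AdicCompletion J (MvPolynomial (Fin n) R) →+* AdicCompletion I R :=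
    AdicCompletion.liftRingHom I
      (fun k ↦ (Ideal.quotientMap (I ^ k) f (hle k)).comp (AdicCompletion.evalₐ J k).toRingHom)
      (by
        intro m k hmk
        ext x
        induction x using AdicCompletion.induction_on with
        | h y =>
          simp only [RingHom.comp_apply, AlgHom.toRingHom_eq_coe, RingHom.coe_coe,
            AdicCompletion.evalₐ_mk, Ideal.quotientMap_mk]
          exact congrArg (Ideal.quotientMap (I ^ m) f (hle m))
            (AdicCompletion.Ideal.mk_eq_mk J hmk y))
  have hF (x : MvPolynomial (Fin n) R) :
      F (algebraMap _ _ x) = algebraMap R (AdicCompletion I R) (f x) := by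
    refine AdicCompletion.ext_evalₐ fun k ↦ ?_
    rw [AdicCompletion.evalₐ_liftRingHom]
    simp [AdicCompletion.algebraMap_apply]
  have := AdicCompletion.isAdicComplete_self J (MvPolynomial.idealOfVars_fg (Fin n) R)
  have := AdicCompletion.isAdicComplete_self I (IsNoetherian.noetherian I)
  have hmap : (J.map (algebraMap _ (AdicCompletion J (MvPolynomial (Fin n) R)))).map F =
      I.map (algebraMap R (AdicCompletion I R)) := by
    rw [Ideal.map_map, (RingHom.ext hF : F.comp _ = (algebraMap _ _).comp f), ← Ideal.map_map]
    exact congrArg _ hJ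
  have : IsHausdorff ((J.map (algebraMap _ (AdicCompletion J (MvPolynomial (Fin n) R)))).map F)
      (AdicCompletion I R) := by
    rw [hmap]; infer_instance
  have hsurj : Function.Surjective F := by
    refine surjective_of_mk_map_comp_surjective
      (I := J.map (algebraMap _ (AdicCompletion J (MvPolynomial (Fin n) R)))) F fun y ↦ ?_
    obtain ⟨y, rfl⟩ := Ideal.Quotient.mk_surjective y
    obtain ⟨a, ha⟩ := Ideal.Quotient.mk_surjective (AdicCompletion.evalOneₐ I y)
    refine ⟨algebraMap (MvPolynomial (Fin n) R) _ (MvPolynomial.C a), ?_⟩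
    rw [RingHom.comp_apply, hF, Ideal.Quotient.eq, hmap,
      ← AdicCompletion.ker_evalOneₐ_eq_map I (IsNoetherian.noetherian I), RingHom.mem_ker]
    simp [f, ← ha, AdicCompletion.algebraMap_apply]
  have : IsNoetherianRing (AdicCompletion J (MvPolynomial (Fin n) R)) :=
    isNoetherianRing_of_ringEquiv _
      (MvPowerSeries.toAdicCompletionAlgEquiv (Fin n) R).toRingEquiv
  exact isNoetherianRing_of_surjective _ _ F hsurj

theorem IsRegularLocal.isField {R : Type u} [CommRing R] [IsLocalRing R] [IsNoetherianRing R]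
    (h : IsRegularLocal R) (hdim : ringKrullDim R = 0) : IsField R := by
  rw [IsRegularLocal, hdim] at h
  exact finrank_cotangentSpace_eq_zero_iff.mp (by exact_mod_cast h.symm)

theorem mem_minimalPrimes_of_comap {B F : Type*} [CommRing B] [CommRing F] (f : B →+* F)
    (hf : ∀ x : F, ∃ s b, IsUnit (f s) ∧ f s * x = f b) (P : Ideal F) [P.IsPrime]
    (h : P.comap f ∈ minimalPrimes B) : P ∈ minimalPrimes F := by
  refine ⟨⟨inferInstance, bot_le⟩, fun P' hP' hle x hx ↦ ?_⟩
  have := hP'.1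
  obtain ⟨s, b, hs, hb⟩ := hf x
  have hbP : b ∈ P.comap f := by
    rw [Ideal.mem_comap, ← hb]
    exact P.mul_mem_left _ hx
  have := h.2 ⟨(inferInstance : (P'.comap f).IsPrime), bot_le⟩ (Ideal.comap_mono hle) hbP
  rw [Ideal.mem_comap, ← hb] at this
  exact (Ideal.unit_mul_mem_iff_mem _ hs).mp this

/-- Up to units coming from `A`, the fibre of an `A`-algebra over `p` consists of elements of the
algebra. -/
theorem exists_isUnit_mul_eq_includeRight {A B : Type*} [CommRing A] [CommRing B] [Algebra A B]
    (p : Ideal A) [p.IsPrime] (x : ResidueField (Localization.AtPrime p) ⊗[A] B) :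
    ∃ (s : B) (b : B), IsUnit ((1 : ResidueField (Localization.AtPrime p)) ⊗ₜ[A] s) ∧
      (1 ⊗ₜ[A] s) * x = 1 ⊗ₜ[A] b := by
  induction x with
  | zero => exact ⟨1, 0, by simp [← Algebra.TensorProduct.one_def], by simp⟩
  | tmul k b =>
    obtain ⟨k, rfl⟩ := residue_surjective k
    obtain ⟨a, s, rfl⟩ := IsLocalization.exists_mk'_eq p.primeCompl k
    have hs : (1 : ResidueField (Localization.AtPrime p)) ⊗ₜ[A] algebraMap A B s =
        algebraMap A _ s.1 ⊗ₜ[A] 1 := by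
      rw [Algebra.algebraMap_eq_smul_one, ← TensorProduct.smul_tmul,
        ← Algebra.algebraMap_eq_smul_one]
    refine ⟨algebraMap A B s, a • b, ?_, ?_⟩
    · rw [hs]
      have : IsUnit (algebraMap A (ResidueField (Localization.AtPrime p)) s.1) := by
        rw [IsScalarTower.algebraMap_apply A (Localization.AtPrime p)]
        exact (IsLocalization.map_units _ s).map _
      exact this.map (Algebra.TensorProduct.includeLeft (R := A) (S := A) (B := B))
    · rw [hs, Algebra.TensorProduct.tmul_mul_tmul, ← TensorProduct.smul_tmul, one_mul,
        ← Algebra.algebraMap_eq_smul_one, IsScalarTower.algebraMap_apply A (Localization.AtPrime p),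
        IsScalarTower.algebraMap_apply A (Localization.AtPrime p) _ a,
        ResidueField.algebraMap_eq, ← map_mul, IsLocalization.mk'_spec']
  | add x y hx hy =>
    obtain ⟨s, b, hs, hb⟩ := hx
    obtain ⟨t, c, ht, hc⟩ := hy
    have hmul (x y : B) : (1 : ResidueField (Localization.AtPrime p)) ⊗ₜ[A] (x * y) =
        1 ⊗ₜ x * 1 ⊗ₜ y := by simp
    refine ⟨s * t, t * b + s * c, ?_, ?_⟩
    · rw [hmul]; exact hs.mul ht
    · rw [TensorProduct.tmul_add, hmul, hmul, hmul, ← hb, ← hc]; ring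

/-- If the fibre of `A → B` over `p` is a field locally at its minimal primes and `q` is a
minimal prime of `B` over `p`, then `p` generates the maximal ideal of `B_q`. -/
theorem map_eq_maximalIdeal_of_isField_fiber {A B : Type*} [CommRing A] [CommRing B]
    [Algebra A B] (p : Ideal A) [p.IsPrime] (q : Ideal B) [q.IsPrime]
    [q.LiesOver p] (hq : q ∈ minimalPrimes B)
    (hfib : ∀ (P : Ideal (ResidueField (Localization.AtPrime p) ⊗[A] B)) [P.IsPrime],
      P ∈ minimalPrimes (ResidueField (Localization.AtPrime p) ⊗[A] B) →
        IsField (Localization.AtPrime P)) :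
    p.map (algebraMap A (Localization.AtPrime q)) = maximalIdeal (Localization.AtPrime q) := by
  let S := Localization.AtPrime q
  let I : Ideal S := p.map (algebraMap A S)
  have hI : I ≤ maximalIdeal S := by
    rw [← Localization.AtPrime.map_eq_maximalIdeal, Ideal.map_le_iff_le_comap]
    intro x hx
    rw [Ideal.mem_comap, IsScalarTower.algebraMap_apply A B S]
    refine Ideal.mem_map_of_mem _ ?_
    rwa [← Ideal.mem_comap, ← Ideal.under_def, ← q.over_def p]
  have : Nontrivial (S ⧸ I) := Ideal.Quotient.nontrivial_iff.mpr
    (ne_top_of_le_ne_top (maximalIdeal.isMaximal S).ne_top hI)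
  have : IsLocalRing (S ⧸ I) := .of_surjective' _ Ideal.Quotient.mk_surjective
  have hloc : IsLocalHom (Ideal.Quotient.mk I) := .of_surjective _ Ideal.Quotient.mk_surjective
  let gR : Localization.AtPrime p →ₐ[A] S ⧸ I :=
    IsLocalization.liftAlgHom (M := p.primeCompl) (f := Algebra.ofId A (S ⧸ I)) fun s ↦ by
      rw [Algebra.ofId_apply, IsScalarTower.algebraMap_apply A S,
        IsScalarTower.algebraMap_apply A B S]
      refine IsUnit.map _ (IsLocalization.map_units (M := q.primeCompl) S ⟨algebraMap A B s, ?_⟩)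
      intro h
      exact s.2 ((Ideal.mem_of_liesOver q p s.1).mpr h)
  have hgR (x) (hx : x ∈ maximalIdeal (Localization.AtPrime p)) : gR x = 0 := by
    rw [← RingHom.mem_ker]
    refine SetLike.le_def.mp ?_ hx
    rw [← Localization.AtPrime.map_eq_maximalIdeal, Ideal.map_le_iff_le_comap]
    intro a ha
    change gR (algebraMap A _ a) = 0
    rw [AlgHom.commutes, IsScalarTower.algebraMap_apply A S, ← RingHom.mem_ker,
      Ideal.Quotient.algebraMap_eq,
      Ideal.mk_ker]
    exact Ideal.mem_map_of_mem _ ha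
  let gK : ResidueField (Localization.AtPrime p) →ₐ[A] S ⧸ I := Ideal.Quotient.liftₐ _ gR hgR
  let g : ResidueField (Localization.AtPrime p) ⊗[A] B →ₐ[A] S ⧸ I :=
    Algebra.TensorProduct.lift gK (IsScalarTower.toAlgHom A B (S ⧸ I)) fun _ _ ↦ .all _ _
  let ι : B →+* ResidueField (Localization.AtPrime p) ⊗[A] B :=
    (Algebra.TensorProduct.includeRight : B →ₐ[A] _).toRingHom
  have hg (b : B) : g (ι b) = Ideal.Quotient.mk I (algebraMap B S b) := by
    simp [g, ι]
  let P := (maximalIdeal (S ⧸ I)).comap g.toRingHom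
  have hunit (b : B) : b ∈ P.comap ι ↔ b ∈ q := by
    change g (ι b) ∈ maximalIdeal (S ⧸ I) ↔ _
    rw [hg, mem_maximalIdeal, mem_nonunits_iff, isUnit_map_iff,
      IsLocalization.AtPrime.isUnit_to_map_iff S q]
    simp [Ideal.primeCompl]
  have hPq : P.comap ι = q := Ideal.ext hunit
  have hPmin : P ∈ minimalPrimes (ResidueField (Localization.AtPrime p) ⊗[A] B) :=
    mem_minimalPrimes_of_comap ι (exists_isUnit_mul_eq_includeRight p) P (hPq ▸ hq)
  have hfield := hfib P hPmin
  refine le_antisymm hI ?_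
  rw [← Localization.AtPrime.map_eq_maximalIdeal, Ideal.map_le_iff_le_comap]
  intro b hb
  have hb0 : algebraMap _ (Localization.AtPrime P) (ι b) = 0 := by
    by_contra h0
    obtain ⟨c, hc⟩ := hfield.mul_inv_cancel h0
    exact (IsLocalization.AtPrime.isUnit_to_map_iff _ P _).mp (.of_mul_eq_one _ hc)
      ((hunit b).mpr hb)
  obtain ⟨t, ht⟩ := (IsLocalization.map_eq_zero_iff P.primeCompl _ _).mp hb0
  have hgt : IsUnit (g t.1) := by
    by_contra h
    exact t.2 h
  have : g t.1 * g (ι b) = 0 := by rw [← map_mul, ht, map_zero]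
  rwa [hgt.mul_right_eq_zero, hg, ← RingHom.mem_ker, Ideal.mk_ker] at this

theorem IsGeometricallyRegular.isField {k B : Type u} [Field k] [CommRing B] [Algebra k B]
    [IsNoetherianRing B] (h : IsGeometricallyRegular k B) (P : Ideal B) [P.IsPrime]
    (hP : P ∈ minimalPrimes B) : IsField (Localization.AtPrime P) := by
  let e : k ⊗[k] B ≃+* B := (Algebra.TensorProduct.lid k B).toRingEquiv
  have : IsNoetherianRing (k ⊗[k] B) := isNoetherianRing_of_ringEquiv _ e.symm
  have hmin : P.comap e ∈ minimalPrimes (k ⊗[k] B) := by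
    refine mem_minimalPrimes_of_comap e.symm.toRingHom
      (fun x ↦ ⟨1, e x, by simp, by simp⟩) _ ?_
    convert hP
    ext x
    change e (e.symm x) ∈ P ↔ _
    rw [e.apply_symm_apply]
  have hfield : IsField (Localization.AtPrime (P.comap e)) := by
    refine (h k inferInstance _).isField ?_
    rw [IsLocalization.AtPrime.ringKrullDim_eq_height (P.comap e),
      Ideal.height_eq_zero_iff.mpr hmin]
    rfl
  exact (Localization.localRingEquiv (P.comap e) P e rfl).symm.toMulEquiv.isField hfield

theorem length_localization_completion_eq_of_isGRing (A : Type u) [CommRing A]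
    [IsLocalRing A] [IsNoetherianRing A] (hG : IsGRing A)
    (p : Ideal A) [p.IsPrime] (hp : p ∈ minimalPrimes A)
    (q : Ideal (AdicCompletion (IsLocalRing.maximalIdeal A) A)) [q.IsPrime]
    (hq : q ∈ minimalPrimes (AdicCompletion (IsLocalRing.maximalIdeal A) A))
    (hpq : q.comap (algebraMap A (AdicCompletion (IsLocalRing.maximalIdeal A) A)) = p) :
    ringLength (Localization.AtPrime q) = ringLength (Localization.AtPrime p) := by
  have : IsNoetherianRing (AdicCompletion (maximalIdeal A) A) :=
    AdicCompletion.isNoetherianRing _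
  have : q.LiesOver p := ⟨hpq.symm⟩
  let := Localization.AtPrime.algebraOfLiesOver p q
  have : IsNoetherianRing
      (ResidueField (Localization.AtPrime p) ⊗[A] AdicCompletion (maximalIdeal A) A) := by
    have : Algebra.EssFiniteType A (ResidueField (Localization.AtPrime p)) :=
      inferInstanceAs (Algebra.EssFiniteType A p.ResidueField)
    have : IsNoetherianRing
        (AdicCompletion (maximalIdeal A) A ⊗[A] ResidueField (Localization.AtPrime p)) :=
      Algebra.EssFiniteType.isNoetherianRing (AdicCompletion (maximalIdeal A) A) _
    exact isNoetherianRing_of_ringEquiv _ (Algebra.TensorProduct.comm A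
      (AdicCompletion (maximalIdeal A) A) (ResidueField (Localization.AtPrime p))).toRingEquiv
  have h := map_eq_maximalIdeal_of_isField_fiber p q hq fun P _ ↦ (hG p).isField P
  have hmap : (maximalIdeal (Localization.AtPrime p)).map
      (algebraMap (Localization.AtPrime p) (Localization.AtPrime q)) =
      maximalIdeal (Localization.AtPrime q) := by
    rw [← Localization.AtPrime.map_eq_maximalIdeal, Ideal.map_map,
      ← IsScalarTower.algebraMap_eq, h]
  have hlen := IsLocalRing.length_baseChange (Localization.AtPrime p) (Localization.AtPrime q)
    (Localization.AtPrime p)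
  rw [(AlgebraTensorModule.rid (Localization.AtPrime p) (Localization.AtPrime q)
    (Localization.AtPrime q)).length_eq, hmap] at hlen
  have hone : Module.length (Localization.AtPrime q)
      (Localization.AtPrime q ⧸ maximalIdeal (Localization.AtPrime q)) = 1 :=
    Module.length_eq_one_iff.mpr
      (isSimpleModule_iff_quot_maximal.mpr ⟨_, inferInstance, ⟨.refl _ _⟩⟩)
  rw [hone, mul_one] at hlen
  rw [ringLength, ringLength, ← Module.coe_length, ← Module.coe_length, hlen]
end

section
/- Let A be a Noetherian complete local ring and let B = A[[x_1, ..., x_n]] be a formal power series ring over A. Then contraction of primes induces a bijection between the minimal primes of B and the minimal primes of A, and this bijection preserves multiplicities: for a minimal prime q of B lying over the minimal prime p of A, length(B_q) = length(A_p). -/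
namespace MvPowerSeries

variable {σ A : Type*} [CommRing A]

/-- Extension of a finitely generated ideal to a power series ring consists of the power series
with all coefficients in the ideal. -/
theorem mem_map_algebraMap_iff_of_fg {I : Ideal A} (hI : I.FG) {f : MvPowerSeries σ A} :
    f ∈ I.map (algebraMap A (MvPowerSeries σ A)) ↔ ∀ d, coeff d f ∈ I := by
  constructor
  · intro hf d
    have hle : I.map (algebraMap A (MvPowerSeries σ A)) ≤
        RingHom.ker (map (σ := σ) (Ideal.Quotient.mk I)) := by
      rw [Ideal.map_le_iff_le_comap]
      intro a ha
      simp [RingHom.mem_ker, algebraMap_apply, Ideal.Quotient.eq_zero_iff_mem.mpr ha]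
    have h := congrArg (coeff d) (RingHom.mem_ker.mp (hle hf))
    rwa [coeff_map, map_zero, Ideal.Quotient.eq_zero_iff_mem] at h
  · intro hf
    obtain ⟨k, g, rfl⟩ := Submodule.fg_iff_exists_fin_generating_family.mp hI
    have h (d : σ →₀ ℕ) : ∃ c : Fin k → A, ∑ i, c i • g i = coeff d f :=
      (Submodule.mem_span_range_iff_exists_fun A).mp (hf d)
    choose c hc using h
    have hsum : f = ∑ i, (show MvPowerSeries σ A from fun d => c d i) * C (g i) := by
      ext d
      rw [map_sum, ← hc d]
      exact Finset.sum_congr rfl fun i _ => by rw [coeff_mul_C]; rfl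
    rw [hsum]
    refine Ideal.sum_mem _ fun i _ => Ideal.mul_mem_left _ _ ?_
    exact Ideal.mem_map_of_mem (algebraMap A (MvPowerSeries σ A))
      (Submodule.subset_span (Set.mem_range_self i))

/-- Power series rings over a Noetherian ring are flat. -/
theorem flat_of_isNoetherianRing [IsNoetherianRing A] : Module.Flat A (MvPowerSeries σ A) := by
  refine Module.Flat.of_forall_isTrivialRelation fun {l a x} hx => ?_
  let φ : (Fin l → A) →ₗ[A] A := Fintype.linearCombination A a
  obtain ⟨k, g, hg⟩ := Submodule.fg_iff_exists_fin_generating_family.mp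
    (IsNoetherian.noetherian φ.ker)
  have h (d : σ →₀ ℕ) : ∃ c : Fin k → A, ∑ j, c j • g j = fun i => coeff d (x i) := by
    rw [← Submodule.mem_span_range_iff_exists_fun, hg, LinearMap.mem_ker]
    simpa [φ, Fintype.linearCombination_apply, mul_comm] using congrArg (coeff d) hx
  choose c hc using h
  refine ⟨k, fun i j => g j i, fun j d => c d j, fun i => ?_, fun j => ?_⟩
  · ext d
    rw [map_sum, ← congrFun (hc d) i, Finset.sum_apply]
    exact Finset.sum_congr rfl fun j _ => mul_comm _ _
  · have hj : g j ∈ φ.ker := hg ▸ Submodule.subset_span (Set.mem_range_self j)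
    simpa [φ, Fintype.linearCombination_apply, mul_comm] using hj

theorem ker_map_quotientMk [IsNoetherianRing A] (I : Ideal A) :
    RingHom.ker (map (σ := σ) (Ideal.Quotient.mk I)) =
      I.map (algebraMap A (MvPowerSeries σ A)) := by
  ext f
  rw [mem_map_algebraMap_iff_of_fg (IsNoetherian.noetherian I), RingHom.mem_ker,
    MvPowerSeries.ext_iff]
  simp [Ideal.Quotient.eq_zero_iff_mem]

theorem isPrime_map_algebraMap [IsNoetherianRing A] (p : Ideal A) [p.IsPrime] :
    (p.map (algebraMap A (MvPowerSeries σ A))).IsPrime := by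
  rw [← ker_map_quotientMk]
  have : IsDomain (MvPowerSeries σ (A ⧸ p)) := NoZeroDivisors.to_isDomain _
  exact RingHom.ker_isPrime _

theorem comap_map_algebraMap [IsNoetherianRing A] (I : Ideal A) :
    (I.map (algebraMap A (MvPowerSeries σ A))).comap (algebraMap A (MvPowerSeries σ A)) = I := by
  refine le_antisymm (fun a ha => ?_) Ideal.le_comap_map
  have h := (mem_map_algebraMap_iff_of_fg (IsNoetherian.noetherian I)).mp (Ideal.mem_comap.mp ha) 0
  simpa [algebraMap_apply] using h

theorem map_algebraMap_mem_minimalPrimes [IsNoetherianRing A] {p : Ideal A}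
    (hp : p ∈ minimalPrimes A) :
    p.map (algebraMap A (MvPowerSeries σ A)) ∈ minimalPrimes (MvPowerSeries σ A) := by
  have : p.IsPrime := hp.1.1
  refine ⟨⟨isPrime_map_algebraMap p, bot_le⟩, fun q hq hle => ?_⟩
  have : q.IsPrime := hq.1
  rw [Ideal.map_le_iff_le_comap]
  exact hp.2 ⟨inferInstance, bot_le⟩ ((Ideal.comap_mono hle).trans_eq (comap_map_algebraMap p))

theorem exists_eq_map_of_mem_minimalPrimes [IsNoetherianRing A] {q : Ideal (MvPowerSeries σ A)}
    (hq : q ∈ minimalPrimes (MvPowerSeries σ A)) :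
    ∃ p ∈ minimalPrimes A, q = p.map (algebraMap A (MvPowerSeries σ A)) := by
  have : q.IsPrime := hq.1.1
  obtain ⟨p, hp, hle⟩ := Ideal.exists_minimalPrimes_le
    (bot_le : ⊥ ≤ q.comap (algebraMap A (MvPowerSeries σ A)))
  have : p.IsPrime := hp.1.1
  have hle' := Ideal.map_le_iff_le_comap.mpr hle
  exact ⟨p, hp, le_antisymm (hq.2 ⟨isPrime_map_algebraMap p, bot_le⟩ hle') hle'⟩

theorem map_comap_of_mem_minimalPrimes [IsNoetherianRing A] {q : Ideal (MvPowerSeries σ A)}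
    (hq : q ∈ minimalPrimes (MvPowerSeries σ A)) :
    (q.comap (algebraMap A (MvPowerSeries σ A))).map (algebraMap A (MvPowerSeries σ A)) = q := by
  obtain ⟨p, -, rfl⟩ := exists_eq_map_of_mem_minimalPrimes hq
  rw [comap_map_algebraMap]

end MvPowerSeries

/-- A flat local homomorphism under which the maximal ideal extends to the maximal ideal
preserves the length of the ring. -/
theorem IsLocalRing.length_eq_of_flat_of_map_maximalIdeal {R S : Type*} [CommRing R] [CommRing S]
    [IsLocalRing R] [IsLocalRing S] [Algebra R S] [IsLocalHom (algebraMap R S)] [Module.Flat R S]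
    (h : (maximalIdeal R).map (algebraMap R S) = maximalIdeal S) :
    Module.length S S = Module.length R R := by
  have hsimple : IsSimpleModule S (S ⧸ maximalIdeal S) :=
    isSimpleModule_iff_quot_maximal.mpr
      ⟨maximalIdeal S, inferInstance, ⟨LinearEquiv.refl S (S ⧸ maximalIdeal S)⟩⟩
  rw [← (TensorProduct.AlgebraTensorModule.rid R S S).length_eq, IsLocalRing.length_baseChange R S R,
    h, Module.length_eq_one S (S ⧸ maximalIdeal S), mul_one]

/-- If `q` is extended from its contraction along a flat algebra, then localizing at `q` and at
its contraction gives rings of the same length. -/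
theorem Localization.AtPrime.length_eq_of_flat {A B : Type*} [CommRing A] [CommRing B]
    [Algebra A B] [Module.Flat A B] (p : Ideal A) [p.IsPrime] (q : Ideal B) [q.IsPrime]
    [q.LiesOver p] (h : p.map (algebraMap A B) = q) :
    Module.length (Localization.AtPrime q) (Localization.AtPrime q) =
      Module.length (Localization.AtPrime p) (Localization.AtPrime p) := by
  let := Localization.AtPrime.algebraOfLiesOver p q
  have : IsLocalHom (algebraMap (Localization.AtPrime p) (Localization.AtPrime q)) := by
    rw [RingHom.algebraMap_toAlgebra]
    exact Localization.isLocalHom_localRingHom p q (algebraMap A B) Ideal.LiesOver.over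
  apply IsLocalRing.length_eq_of_flat_of_map_maximalIdeal
  rw [← Localization.AtPrime.map_eq_maximalIdeal, ← Localization.AtPrime.map_eq_maximalIdeal,
    Ideal.map_map, ← IsScalarTower.algebraMap_eq, IsScalarTower.algebraMap_eq A B, ← Ideal.map_map,
    h]

theorem minimalPrimes_powerSeries_bijOn (A : Type u) [CommRing A] [IsLocalRing A]
    [IsNoetherianRing A] [IsAdicComplete (IsLocalRing.maximalIdeal A) A] (n : ℕ) :
    Set.BijOn (fun q : Ideal (MvPowerSeries (Fin n) A) =>
        q.comap (algebraMap A (MvPowerSeries (Fin n) A)))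
      (minimalPrimes (MvPowerSeries (Fin n) A)) (minimalPrimes A) ∧
    ∀ (q : Ideal (MvPowerSeries (Fin n) A)) [q.IsPrime],
      q ∈ minimalPrimes (MvPowerSeries (Fin n) A) →
      ringLength (Localization.AtPrime q) =
        ringLength (Localization.AtPrime
          (q.comap (algebraMap A (MvPowerSeries (Fin n) A)))) := by
  refine ⟨⟨fun q hq => ?_, fun q hq q' hq' h => ?_, fun p hp => ?_⟩, fun q _ hq => ?_⟩
  · obtain ⟨p, hp, rfl⟩ := MvPowerSeries.exists_eq_map_of_mem_minimalPrimes hq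
    simpa only [MvPowerSeries.comap_map_algebraMap] using hp
  · rw [← MvPowerSeries.map_comap_of_mem_minimalPrimes hq,
      ← MvPowerSeries.map_comap_of_mem_minimalPrimes hq']
    exact congrArg _ h
  · exact ⟨_, MvPowerSeries.map_algebraMap_mem_minimalPrimes hp,
      MvPowerSeries.comap_map_algebraMap p⟩
  · have : Module.Flat A (MvPowerSeries (Fin n) A) := MvPowerSeries.flat_of_isNoetherianRing
    have : q.LiesOver (q.comap (algebraMap A (MvPowerSeries (Fin n) A))) := ⟨rfl⟩
    rw [ringLength, ringLength, ← Module.coe_length, ← Module.coe_length,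
      Localization.AtPrime.length_eq_of_flat _ q
        (MvPowerSeries.map_comap_of_mem_minimalPrimes hq)]
end

section
/- Let f : W → V be a scheme-theoretically dominant morphism of irreducible locally Noetherian schemes which is locally of finite type. Then there is a non-empty open subset of points w ∈ W such that dim_w W_{f(w)} = dim_w W − dim_{f(w)} V, where W_{f(w)} denotes the fibre of f over f(w). -/
open AlgebraicGeometry TopologicalSpace Order
open TopologicalSpace Order

/-- A morphism of schemes is scheme-theoretically dominant if the map
`O_V → f_* O_W` is injective on all opens. -/
def SchemeTheoreticallyDominant {W V : Scheme.{u}} (f : W ⟶ V) : Prop :=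
  ∀ U : V.Opens, Function.Injective (f.app U)

section PointCodim

open Topology

/-- The codimension of a point of a topological space: the supremum of the lengths of chains of
strict generizations starting at the point. -/
noncomputable def pointCodim {X : Type*} [TopologicalSpace X] (x : X) : ℕ∞ :=
  @Order.coheight X (specializationPreorder X) x

variable {X Y : Type*} [TopologicalSpace X] [TopologicalSpace Y]

lemma topologicalKrullDim_eq_iSup_pointCodim (X : Type*) [TopologicalSpace X] [QuasiSober X]
    [T0Space X] : topologicalKrullDim X = ⨆ x : X, (pointCodim x : WithBot ℕ∞) := by
  let := specializationOrder X
  rw [topologicalKrullDim, Order.krullDim_eq_of_orderIso irreducibleSetEquivPoints,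
    Order.krullDim_eq_iSup_coheight]
  rfl

lemma GeneralizingMap.pointCodim_apply {f : X → Y} (hg : GeneralizingMap f) (hf : Continuous f)
    (hf' : ∀ x x', x ⤳ x' → f x' ⤳ f x → x' ⤳ x) (x : X) :
    pointCodim (f x) = pointCodim x := by
  let := specializationPreorder X
  let := specializationPreorder Y
  refine (Order.coheight_eq_of_strictMono f (fun a b h ↦ ?_) (fun a b h ↦ ?_) x).symm
  · exact lt_of_le_not_ge (h.le.map hf : f b ⤳ f a) fun h' ↦ h.not_ge (hf' b a h.le h')
  · obtain ⟨a', ha', rfl⟩ := hg (show b ⤳ f a from h.le)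
    exact ⟨a', lt_of_le_not_ge ha' fun h' ↦ h.not_ge (Specializes.map h' hf), rfl⟩

lemma Topology.IsInducing.pointCodim_apply {f : X → Y} (hf : IsInducing f)
    (hr : StableUnderGeneralization (Set.range f)) (x : X) :
    pointCodim (f x) = pointCodim x := by
  refine GeneralizingMap.pointCodim_apply ?_ hf.continuous
    (fun _ _ _ h ↦ hf.specializes_iff.mp h) x
  intro a b hab
  obtain ⟨a', rfl⟩ := hr hab ⟨a, rfl⟩
  exact ⟨a', hf.specializes_iff.mp hab, rfl⟩

lemma Homeomorph.pointCodim_apply (e : X ≃ₜ Y) (x : X) : pointCodim (e x) = pointCodim x :=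
  e.isInducing.pointCodim_apply (by simpa using stableUnderGeneralization_univ) x

lemma IsOpen.pointCodim_coe {U : Set X} (hU : IsOpen U) (x : U) :
    pointCodim (x : X) = pointCodim x :=
  IsInducing.subtypeVal.pointCodim_apply (by simpa using hU.stableUnderGeneralization) x

lemma IsOpen.topologicalKrullDim_eq [QuasiSober X] [T0Space X] {U : Set X} (hU : IsOpen U) :
    topologicalKrullDim U = ⨆ x : U, (pointCodim (x : X) : WithBot ℕ∞) := by
  have := hU.isOpenEmbedding_subtypeVal.quasiSober
  rw [topologicalKrullDim_eq_iSup_pointCodim]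
  simp_rw [hU.pointCodim_coe]

lemma quasiSober_preimage_singleton [QuasiSober X] [T0Space Y] {f : X → Y} (hf : Continuous f)
    (y : Y) : QuasiSober (f ⁻¹' {y}) where
  sober {S} hS hS' := by
    obtain ⟨η, hη⟩ := QuasiSober.sober
      (hS.image Subtype.val continuous_subtype_val.continuousOn).closure isClosed_closure
    have hfη : f η = y := by
      obtain ⟨s, hs⟩ := hS.nonempty
      have h1 : η ⤳ s.1 := hη.specializes (subset_closure ⟨s, hs, rfl⟩)
      have h1 := h1.map hf
      rw [s.2] at h1
      refine h1.antisymm ?_ |>.eq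
      rw [specializes_iff_mem_closure]
      have h2 : η ∈ closure (Subtype.val '' S) := hη.mem
      have := image_closure_subset_closure_image hf ⟨η, h2, rfl⟩
      refine closure_mono ?_ this
      rintro _ ⟨_, ⟨z, -, rfl⟩, rfl⟩
      exact z.2
    refine ⟨⟨η, hfη⟩, ?_⟩
    rw [isGenericPoint_def, IsInducing.subtypeVal.closure_eq_preimage_closure_image,
      Set.image_singleton, hη.def, ← IsInducing.subtypeVal.closure_eq_preimage_closure_image,
      hS'.closure_eq]

end PointCodim

section LocalDim

open Topology

variable {X Y : Type*} [TopologicalSpace X] [TopologicalSpace Y]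

lemma localDim_le {x : X} {U : Set X} (hU : IsOpen U) (hx : x ∈ U) :
    localDim X x ≤ topologicalKrullDim U :=
  iInf_le (fun U : {U : Set X // IsOpen U ∧ x ∈ U} ↦ topologicalKrullDim U.1) ⟨U, hU, hx⟩

lemma exists_localDim_eq (x : X) :
    ∃ U : Set X, IsOpen U ∧ x ∈ U ∧ localDim X x = topologicalKrullDim U := by
  have : Nonempty {U : Set X // IsOpen U ∧ x ∈ U} := ⟨⟨Set.univ, isOpen_univ, trivial⟩⟩
  obtain ⟨U, hU⟩ := ciInf_mem
    (fun U : {U : Set X // IsOpen U ∧ x ∈ U} ↦ topologicalKrullDim U.1)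
  exact ⟨U.1, U.2.1, U.2.2, hU.symm⟩

lemma Topology.IsOpenEmbedding.localDim_apply {f : X → Y} (hf : IsOpenEmbedding f) (x : X) :
    localDim Y (f x) = localDim X x := by
  apply le_antisymm
  · obtain ⟨U, hU, hx, h⟩ := exists_localDim_eq x
    rw [h]
    refine (localDim_le (hf.isOpenMap _ hU) ⟨x, hx, rfl⟩).trans_eq ?_
    exact (IsHomeomorph.topologicalKrullDim_eq _
      (hf.isEmbedding.homeomorphImage U).isHomeomorph).symm
  · obtain ⟨U, hU, hx, h⟩ := exists_localDim_eq (f x)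
    rw [h]
    refine (localDim_le (hU.preimage hf.continuous) hx).trans ?_
    exact (hf.isInducing.restrictPreimage U).topologicalKrullDim_le

/-- The dimension formula at `x` relating source, target and fibre of `f`. -/
def FibreDimFormula (f : X → Y) (x : X) : Prop :=
  localDim ↥(f ⁻¹' {f x}) ⟨x, rfl⟩ + localDim Y (f x) = localDim X x

lemma FibreDimFormula.of_isOpenEmbedding {X' Y' : Type*} [TopologicalSpace X'] [TopologicalSpace Y']
    {f' : X' → Y'} {f : X → Y} {i : X' → X} {j : Y' → Y} (hi : IsOpenEmbedding i)
    (hj : IsOpenEmbedding j) (h : ∀ x, f (i x) = j (f' x)) {x : X'} (H : FibreDimFormula f' x) :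
    FibreDimFormula f (i x) := by
  let e : f' ⁻¹' {f' x} → f ⁻¹' {f (i x)} := fun z ↦ ⟨i z, by
    simp only [Set.mem_preimage, Set.mem_singleton_iff, h]; rw [z.2]⟩
  have he : IsOpenEmbedding e := by
    refine ⟨.of_comp (by fun_prop) continuous_subtype_val
      (hi.isEmbedding.comp .subtypeVal), ?_⟩
    have : Set.range e = Subtype.val ⁻¹' (Set.range i) := by
      ext ⟨z, hz⟩
      constructor
      · rintro ⟨w, hw⟩
        exact ⟨w.1, congrArg Subtype.val hw⟩
      · rintro ⟨w, rfl⟩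
        refine ⟨⟨w, hj.injective ?_⟩, rfl⟩
        rw [← h, ← h]
        exact hz
    rw [this]
    exact hi.isOpen_range.preimage continuous_subtype_val
  have h1 := he.localDim_apply ⟨x, rfl⟩
  have h2 : localDim Y (f (i x)) = localDim Y' (f' x) := by rw [h, hj.localDim_apply]
  rw [FibreDimFormula, h2, hi.localDim_apply]
  exact (congrArg (· + _) h1).trans H

lemma fibreDimFormula_of_pointCodim [QuasiSober X] [T0Space X] [QuasiSober Y] [T0Space Y]
    {f : X → Y} (hf : Continuous f) (hfo : IsOpenMap f) (n : ℕ∞)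
    (hadd : ∀ y (x : f ⁻¹' {y}), pointCodim (x : X) = pointCodim y + pointCodim x)
    (hle : ∀ y (x : f ⁻¹' {y}), pointCodim x ≤ n)
    (hex : ∀ O : Set X, IsOpen O → ∀ y ∈ f '' O, ∃ x : f ⁻¹' {y}, x.1 ∈ O ∧ pointCodim x = n)
    (x : X) : FibreDimFormula f x := by
  have hfib : localDim ↥(f ⁻¹' {f x}) ⟨x, rfl⟩ = n := by
    have := quasiSober_preimage_singleton hf (f x)
    obtain ⟨U, hU, hx, h⟩ := exists_localDim_eq (X := f ⁻¹' {f x}) ⟨x, rfl⟩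
    rw [h, hU.topologicalKrullDim_eq]
    refine le_antisymm (iSup_le fun z ↦ by exact_mod_cast hle _ z.1) ?_
    obtain ⟨O, hO, rfl⟩ := isOpen_induced_iff.mp hU
    obtain ⟨z, hz, hzn⟩ := hex O hO (f x) ⟨x, hx, rfl⟩
    exact le_iSup_of_le ⟨z, hz⟩ (by rw [hzn])
  rw [FibreDimFormula, hfib]
  apply le_antisymm
  · obtain ⟨U, hU, hx, h⟩ := exists_localDim_eq x
    have hV := hfo U hU
    grw [h, localDim_le hV ⟨x, hx, rfl⟩]
    rw [hU.topologicalKrullDim_eq, hV.topologicalKrullDim_eq]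
    have : Nonempty U := ⟨⟨x, hx⟩⟩
    have : Nonempty (f '' U) := ⟨⟨f x, x, hx, rfl⟩⟩
    rw [← WithBot.coe_iSup (OrderTop.bddAbove _), ← WithBot.coe_iSup (OrderTop.bddAbove _),
      ← WithBot.coe_add, WithBot.coe_le_coe, ENat.add_iSup]
    refine iSup_le fun y ↦ ?_
    obtain ⟨z, hz, hzn⟩ := hex U hU y y.2
    refine le_iSup_of_le ⟨z, hz⟩ ?_
    rw [hadd, hzn, add_comm]
  · obtain ⟨V, hV, hx, h⟩ := exists_localDim_eq (f x)
    have hU := hV.preimage hf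
    grw [h, localDim_le hU hx]
    rw [hU.topologicalKrullDim_eq, hV.topologicalKrullDim_eq]
    refine iSup_le fun z ↦ ?_
    rw [hadd (f z) ⟨z, rfl⟩, WithBot.coe_add, add_comm]
    exact add_le_add (by exact_mod_cast hle _ _)
      (le_iSup_of_le (⟨f z, z.2⟩ : V) le_rfl)

end LocalDim

section Spec

open Topology PrimeSpectrum

lemma PrimeSpectrum.pointCodim_eq_height {R : Type*} [CommRing R] (x : PrimeSpectrum R) :
    pointCodim x = x.asIdeal.height := by
  let e : @OrderIso (PrimeSpectrum R) (PrimeSpectrum R)ᵒᵈ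
      (specializationPreorder (PrimeSpectrum R)).toLE inferInstance :=
    @RelIso.mk _ _ (specializationPreorder (PrimeSpectrum R)).le _ OrderDual.toDual
      fun {a b} ↦ le_iff_specializes b a
  rw [height_eq_orderHeight]
  exact (@Order.coheight_orderIso _ _ (specializationPreorder (PrimeSpectrum R)) _ e x).symm

lemma MvPolynomial.height_eq_of_isMaximal {k : Type*} [Field k] (n : ℕ)
    (P : Ideal (MvPolynomial (Fin n) k)) [P.IsMaximal] : P.height = n := by
  induction n with
  | zero =>
    have := (isEmptyRingEquiv k (Fin 0)).toMulEquiv.isField (Field.toIsField k)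
    let := this.toField
    rw [Ideal.eq_bot_of_prime P]
    simp
  | succ n ih =>
    let e := (finSuccEquiv k n).toRingEquiv
    let P' := P.map e
    have : P'.IsMaximal := Ideal.map_isMaximal_of_equiv e
    have h1 : (P'.under (MvPolynomial (Fin n) k)).IsMaximal :=
      Polynomial.isMaximal_comap_C_of_isJacobsonRing P'
    have : P'.LiesOver (P'.under (MvPolynomial (Fin n) k)) := ⟨rfl⟩
    rw [← e.height_map P, Polynomial.height_eq_height_add_one (P'.under _) P', ih]
    simp

lemma MvPolynomial.exists_pointCodim_eq {k : Type*} [Field k] {n : ℕ}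
    {O : Set (PrimeSpectrum (MvPolynomial (Fin n) k))} (hO : IsOpen O) (hne : O.Nonempty) :
    ∃ x ∈ O, pointCodim x = n := by
  obtain ⟨x, hx, hx'⟩ := exists_isClosed_singleton_of_isJacobsonRing O hO hne
  rw [isClosed_singleton_iff_isMaximal] at hx'
  exact ⟨x, hx, by rw [pointCodim_eq_height, MvPolynomial.height_eq_of_isMaximal]⟩

lemma MvPolynomial.pointCodim_le {k : Type*} [Field k] {n : ℕ}
    (x : PrimeSpectrum (MvPolynomial (Fin n) k)) : pointCodim x ≤ n := by
  rw [pointCodim_eq_height]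
  have := Ideal.height_le_ringKrullDim_of_ne_top x.2.ne_top
  rw [MvPolynomial.ringKrullDim_of_isNoetherianRing, ringKrullDim_eq_zero_of_field] at this
  simp at this
  exact_mod_cast this

/-- The fibres of affine space are affine spaces over the residue fields. -/
noncomputable def MvPolynomial.fibreHomeomorph {R : Type*} [CommRing R] (n : ℕ)
    (p : PrimeSpectrum R) : PrimeSpectrum.comap (algebraMap R (MvPolynomial (Fin n) R)) ⁻¹' {p} ≃ₜ
      PrimeSpectrum (MvPolynomial (Fin n) p.asIdeal.ResidueField) :=
  (preimageHomeomorphFiber R _ p).trans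
    (homeomorphOfRingEquiv (MvPolynomial.algebraTensorAlgEquiv R _).toRingEquiv)

lemma PrimeSpectrum.pointCodim_eq_add {A B : Type*} [CommRing A] [CommRing B] [Algebra A B]
    [IsNoetherianRing A] [IsNoetherianRing B] [Algebra.HasGoingDown A B] (p : PrimeSpectrum A)
    (x : comap (algebraMap A B) ⁻¹' {p}) :
    pointCodim (x : PrimeSpectrum B) = pointCodim p + pointCodim x := by
  obtain ⟨P, rfl⟩ := x
  have : P.asIdeal.LiesOver (comap (algebraMap A B) P).asIdeal := ⟨rfl⟩
  rw [pointCodim_eq_height, pointCodim_eq_height,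
    Ideal.height_eq_height_add_of_liesOver_of_hasGoingDown (comap (algebraMap A B) P).asIdeal]
  congr 1
  set I := (comap (algebraMap A B) P).asIdeal.map (algebraMap A B) with hI
  have hker : RingHom.ker (Ideal.Quotient.mk I) ≤ P.asIdeal := by
    rw [Ideal.mk_ker]
    exact Ideal.map_comap_le
  have hsurj : Function.Surjective (Ideal.Quotient.mk I) := Ideal.Quotient.mk_surjective
  have hprime : (P.asIdeal.map (Ideal.Quotient.mk I)).IsPrime :=
    Ideal.map_isPrime_of_surjective hsurj hker
  let Q : PrimeSpectrum (B ⧸ I) := ⟨_, hprime⟩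
  have hQ : comap (Ideal.Quotient.mk I) Q = P := by
    ext1
    simp only [comap_asIdeal, Q]
    rw [Ideal.comap_map_of_surjective' _ hsurj, sup_eq_left.mpr hker]
  have hce : IsClosedEmbedding (comap (Ideal.Quotient.mk I)) :=
    isClosedEmbedding_comap_of_surjective _ _ hsurj
  let F := comap (algebraMap A B) ⁻¹' {comap (algebraMap A B) P}
  have hF : ∀ x : F, ∃ y, comap (Ideal.Quotient.mk I) y = x := by
    intro x
    rw [← Set.mem_range, range_comap_of_surjective _ _ hsurj, mem_zeroLocus, Ideal.mk_ker,
      SetLike.coe_subset_coe, hI, Ideal.map_le_iff_le_comap]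
    exact (congrArg PrimeSpectrum.asIdeal x.2).ge
  choose g hg using hF
  have hgi : IsInducing g := hce.isInducing.of_comp_iff.mp (by
    convert! IsInducing.subtypeVal
    exact funext hg)
  have hgQ : g ⟨P, rfl⟩ = Q := hce.injective ((hg _).trans hQ.symm)
  have hgr : StableUnderGeneralization (Set.range g) := by
    rintro _ b hab ⟨x, rfl⟩
    refine ⟨⟨comap (Ideal.Quotient.mk I) b, PrimeSpectrum.ext (le_antisymm ?_ ?_)⟩,
      hce.injective (hg _)⟩
    · have hle := (le_iff_specializes _ _).mpr
        (hab.map hce.continuous)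
      have hx : comap (Ideal.Quotient.mk I) (g x) = x := hg x
      rw [hx] at hle
      exact (Ideal.comap_mono hle).trans (congrArg PrimeSpectrum.asIdeal x.2).le
    · refine Ideal.map_le_iff_le_comap.mp (?_ : I ≤ (comap (Ideal.Quotient.mk I) b).asIdeal)
      intro z hz
      change Ideal.Quotient.mk I z ∈ b.asIdeal
      rw [Ideal.Quotient.eq_zero_iff_mem.mpr hz]
      exact zero_mem _
  rw [← hgi.pointCodim_apply hgr, hgQ, pointCodim_eq_height]

lemma PrimeSpectrum.fibreDimFormula_comap {A B : Type*} [CommRing A] [CommRing B] [Algebra A B]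
    [IsNoetherianRing A] {n : ℕ} [Algebra (MvPolynomial (Fin n) A) B]
    [IsScalarTower A (MvPolynomial (Fin n) A) B] [Algebra.FiniteType (MvPolynomial (Fin n) A) B]
    [Algebra.HasGoingDown (MvPolynomial (Fin n) A) B]
    (hB : ∀ P Q : PrimeSpectrum B, P ≤ Q →
      comap (algebraMap (MvPolynomial (Fin n) A) B) Q ≤
        comap (algebraMap (MvPolynomial (Fin n) A) B) P → Q ≤ P) (x : PrimeSpectrum B) :
    FibreDimFormula (comap (algebraMap A B)) x := by
  set S := MvPolynomial (Fin n) A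
  have : IsNoetherianRing B := Algebra.FiniteType.isNoetherianRing S B
  have : Algebra.HasGoingDown A B := .trans A S B
  have : Algebra.FiniteType A B := .trans (S := S) inferInstance inferInstance
  have : Algebra.FinitePresentation A B := Algebra.FinitePresentation.of_finiteType.mp inferInstance
  have : Algebra.FinitePresentation S B := Algebra.FinitePresentation.of_finiteType.mp inferInstance
  have hcomp (z : PrimeSpectrum B) :
      comap (algebraMap A S) (comap (algebraMap S B) z) = comap (algebraMap A B) z := by
    rw [← comap_comp_apply, ← IsScalarTower.algebraMap_eq]
  let φ (p : PrimeSpectrum A) (z : comap (algebraMap A B) ⁻¹' {p}) :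
      comap (algebraMap A S) ⁻¹' {p} := ⟨comap (algebraMap S B) z, (hcomp z).trans z.2⟩
  have hφ (p) : Continuous (φ p) := by
    unfold φ
    fun_prop
  have hφ' (p) (z z') (h : z ⤳ z') (h' : φ p z' ⤳ φ p z) : z' ⤳ z := by
    rw [subtype_specializes_iff, ← le_iff_specializes] at *
    exact hB _ _ h h'
  have hg : GeneralizingMap (comap (algebraMap S B)) :=
    Algebra.HasGoingDown.iff_generalizingMap_primeSpectrumComap.mp inferInstance
  have hgφ (p) : GeneralizingMap (φ p) := by
    intro z y hy
    obtain ⟨z', hz', h⟩ := hg (a := z.1) (hy.map continuous_subtype_val)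
    refine ⟨⟨z', ?_⟩, (subtype_specializes_iff _ _).mpr hz', Subtype.ext h⟩
    rw [Set.mem_preimage, ← hcomp, h]
    exact y.2
  have hφn (p) (z) : pointCodim (φ p z) = pointCodim z :=
    (hgφ p).pointCodim_apply (hφ p) (hφ' p) z
  refine fibreDimFormula_of_pointCodim (continuous_comap _)
    (isOpenMap_comap_of_hasGoingDown_of_finitePresentation) n pointCodim_eq_add ?_ ?_ x
  · intro p z
    rw [← hφn, ← (MvPolynomial.fibreHomeomorph n p).pointCodim_apply]
    exact MvPolynomial.pointCodim_le _
  · rintro O hO _ ⟨z, hz, rfl⟩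
    let p := comap (algebraMap A B) z
    have hO' : IsOpen ((MvPolynomial.fibreHomeomorph n p) ''
        (Subtype.val ⁻¹' (comap (algebraMap S B) '' O))) :=
      (MvPolynomial.fibreHomeomorph n p).isOpenMap _
        ((isOpenMap_comap_of_hasGoingDown_of_finitePresentation _ hO).preimage
          continuous_subtype_val)
    obtain ⟨_, ⟨y, ⟨w, hw, hwy⟩, rfl⟩, hy⟩ := MvPolynomial.exists_pointCodim_eq hO'
      ⟨_, φ p ⟨z, rfl⟩, ⟨z, hz, rfl⟩, rfl⟩
    have hwp : comap (algebraMap A B) w = p := by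
      rw [← hcomp, hwy]
      exact y.2
    refine ⟨⟨w, hwp⟩, hw, ?_⟩
    rw [← hφn, ← hy, Homeomorph.pointCodim_apply]
    exact congrArg _ (Subtype.ext hwy)

lemma exists_finite_localization (R B : Type*) [CommRing R] [IsDomain R] [CommRing B] [Algebra R B]
    [Algebra.FiniteType R B] [Algebra.IsAlgebraic R B] :
    ∃ r : R, r ≠ 0 ∧ Module.Finite (Localization (Submonoid.powers r))
      (Localization (Algebra.algebraMapSubmonoid B (Submonoid.powers r))) := by
  obtain ⟨t, ht⟩ := Algebra.FiniteType.out (R := R) (A := B)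
  obtain ⟨r, hr, hint⟩ := Algebra.IsAlgebraic.exists_integral_multiples R t
  refine ⟨r, hr, ?_⟩
  set R' := Localization (Submonoid.powers r)
  set B' := Localization (Algebra.algebraMapSubmonoid B (Submonoid.powers r))
  have : Algebra.FiniteType B B' := by
    have : IsLocalization.Away (algebraMap R B r) B' := by
      rw [IsLocalization.Away, ← Algebra.algebraMapSubmonoid_powers]
      infer_instance
    have := IsLocalization.Away.finitePresentation (S := B') (algebraMap R B r)
    infer_instance
  have : Algebra.FiniteType R B' := .trans (S := B) inferInstance inferInstance
  have : Algebra.FiniteType R' B' := .of_restrictScalars_finiteType R R' B'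
  obtain ⟨u, hu⟩ : IsUnit (algebraMap R R' r) :=
    IsLocalization.map_units R' (⟨r, Submonoid.mem_powers r⟩ : Submonoid.powers r)
  have hB (b : B) : IsIntegral R' (algebraMap B B' b) := by
    have hb : b ∈ Algebra.adjoin R (t : Set B) := ht ▸ trivial
    induction hb using Algebra.adjoin_induction with
    | mem x hx =>
      have h1 : IsIntegral R (algebraMap B B' (r • x)) := (hint x hx).algebraMap
      have h2 : IsIntegral R' (algebraMap B B' (r • x)) := h1.tower_top
      have h3 : algebraMap B B' x = (u⁻¹ : R'ˣ).1 • algebraMap B B' (r • x) := by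
        rw [Algebra.smul_def r, map_mul, ← IsScalarTower.algebraMap_apply,
          IsScalarTower.algebraMap_apply R R', ← hu, ← Algebra.smul_def, smul_smul,
          Units.inv_mul, one_smul]
      rw [h3]
      exact h2.smul _
    | algebraMap a =>
      rw [← IsScalarTower.algebraMap_apply, IsScalarTower.algebraMap_apply R R']
      exact isIntegral_algebraMap
    | add x y _ _ hx hy => rw [map_add]; exact hx.add hy
    | mul x y _ _ hx hy => rw [map_mul]; exact hx.mul hy
  have : Algebra.IsIntegral R' B' := by
    refine ⟨fun x ↦ ?_⟩
    obtain ⟨b, ⟨_, m, hm, rfl⟩, rfl⟩ := IsLocalization.exists_mk'_eq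
      (Algebra.algebraMapSubmonoid B (Submonoid.powers r)) x
    refine IsIntegral.of_mul_unit (r := IsLocalization.mk' R' 1 ⟨m, hm⟩)
      (y := algebraMap B B' (algebraMap R B m)) ?_ ?_
    · rw [← IsScalarTower.algebraMap_apply, IsScalarTower.algebraMap_apply R R', ← map_mul,
        IsLocalization.mk'_spec _ _ (⟨m, hm⟩ : Submonoid.powers r)]
      simp
    · convert hB b
      exact IsLocalization.mk'_spec B' b (⟨_, m, hm, rfl⟩ : Algebra.algebraMapSubmonoid B _)
  exact Algebra.IsIntegral.finite

lemma exists_flat_localization (R B : Type*) [CommRing R] [IsDomain R] [IsNoetherianRing R]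
    [CommRing B] [Algebra R B] [Module.Finite R B] :
    ∃ r : R, r ≠ 0 ∧ Module.Flat R (Localization.Away (algebraMap R B r)) := by
  have : Module.FinitePresentation R B := Module.finitePresentation_of_finite R B
  obtain ⟨r, hr, hfree, -⟩ := Module.FinitePresentation.exists_free_localizedModule_powers
    (nonZeroDivisors R) (LocalizedModule.mkLinearMap (nonZeroDivisors R) B) (FractionRing R)
  refine ⟨r, nonZeroDivisors.ne_zero hr, ?_⟩
  have : Module.Flat R (Localization (.powers r)) := IsLocalization.flat _ (.powers r)
  have : Module.Flat R (LocalizedModule.Away r B) := .trans R (Localization (.powers r)) _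
  have : IsLocalization (Algebra.algebraMapSubmonoid B (Submonoid.powers r))
      (Localization.Away (algebraMap R B r)) := by
    rw [Algebra.algebraMapSubmonoid_powers]
    infer_instance
  have : IsLocalizedModule (.powers r)
      (IsScalarTower.toAlgHom R B (Localization.Away (algebraMap R B r))).toLinearMap :=
    isLocalizedModule_iff_isLocalization.mpr this
  exact .of_linearEquiv (IsLocalizedModule.iso (.powers r)
    (IsScalarTower.toAlgHom R B (Localization.Away (algebraMap R B r))).toLinearMap).symm

lemma exists_isAlgebraic_mvPolynomial (A B : Type*) [CommRing A] [IsDomain A] [CommRing B]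
    [IsDomain B] [Algebra A B] [FaithfulSMul A B] [Algebra.FiniteType A B] :
    ∃ (n : ℕ) (x : Fin n → B), AlgebraicIndependent A x ∧
      let := (MvPolynomial.aeval (R := A) x).toAlgebra
      Algebra.IsAlgebraic (MvPolynomial (Fin n) A) B := by
  obtain ⟨t, ht⟩ := Algebra.FiniteType.out (R := A) (A := B)
  have : Algebra.IsAlgebraic (Algebra.adjoin A (t : Set B)) B :=
    ⟨fun b ↦ isAlgebraic_algebraMap (⟨b, ht ▸ trivial⟩ : Algebra.adjoin A (t : Set B))⟩
  obtain ⟨s, hst, hs⟩ := exists_isTranscendenceBasis_subset (R := A) (t : Set B)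
  have : Finite s := t.finite_toSet.subset hst
  let e := Finite.equivFin s
  have hx : IsTranscendenceBasis A (fun i ↦ (e.symm i : B)) :=
    (isTranscendenceBasis_equiv e.symm).mpr hs
  refine ⟨_, fun i ↦ e.symm i, hx.1, ?_⟩
  have := hx.isAlgebraic
  let := (MvPolynomial.aeval (R := A) (fun i ↦ (e.symm i : B))).toAlgebra
  exact Algebra.IsAlgebraic.of_ringHom_of_comp_eq (S := Algebra.adjoin A _)
    hx.1.aevalEquiv.toRingEquiv.toRingHom (RingHom.id B)
    hx.1.aevalEquiv.surjective Function.injective_id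
    (RingHom.ext fun p ↦ hx.1.algebraMap_aevalEquiv p)

lemma PrimeSpectrum.exists_fibreDimFormula_of_finite_localization {A R B : Type*} {n : ℕ}
    [CommRing A] [CommRing R] [IsDomain R] [CommRing B] [IsDomain B]
    [IsNoetherianRing A] [Algebra A B] [Algebra (MvPolynomial (Fin n) A) B]
    [IsScalarTower A (MvPolynomial (Fin n) A) B] [Algebra (MvPolynomial (Fin n) A) R]
    [Algebra R B] [IsScalarTower (MvPolynomial (Fin n) A) R B]
    (M : Submonoid (MvPolynomial (Fin n) A)) [IsLocalization M R]
    [Algebra.FiniteType (MvPolynomial (Fin n) A) B] [Module.Finite R B] [FaithfulSMul R B] :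
    ∃ U : Set (PrimeSpectrum B), IsOpen U ∧ U.Nonempty ∧
      ∀ x ∈ U, FibreDimFormula (comap (algebraMap A B)) x := by
  have : IsNoetherianRing R := IsLocalization.isNoetherianRing M R inferInstance
  obtain ⟨r, hr, hflat⟩ := exists_flat_localization R B
  have hrB : algebraMap R B r ≠ 0 := by simpa using hr
  let B' := Localization.Away (algebraMap R B r)
  have : IsDomain B' :=
    IsLocalization.isDomain_localization (powers_le_nonZeroDivisors_of_noZeroDivisors hrB)
  have : Algebra.FiniteType B B' := by
    have := IsLocalization.Away.finitePresentation (S := B') (algebraMap R B r)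
    infer_instance
  have : Algebra.FiniteType (MvPolynomial (Fin n) A) B' :=
    .trans (S := B) inferInstance inferInstance
  have : Module.Flat (MvPolynomial (Fin n) A) R := IsLocalization.flat _ M
  have : Module.Flat (MvPolynomial (Fin n) A) B' := .trans _ R _
  have : Algebra.HasGoingDown (MvPolynomial (Fin n) A) B' := .of_flat
  have hi : IsOpenEmbedding (comap (algebraMap B B')) :=
    localization_away_isOpenEmbedding B' (algebraMap R B r)
  refine ⟨_, hi.isOpen_range, Set.range_nonempty _, ?_⟩
  rintro _ ⟨z, rfl⟩
  refine .of_isOpenEmbedding (f' := comap (algebraMap A B')) hi .id (fun z ↦ ?_)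
    (fibreDimFormula_comap (n := n) (fun P Q hPQ h ↦ ?_) z)
  · rw [← comap_comp_apply, ← IsScalarTower.algebraMap_eq, id]
  · have hcomp (x : PrimeSpectrum B') : comap (algebraMap (MvPolynomial (Fin n) A) B') x =
        comap (algebraMap (MvPolynomial (Fin n) A) R) (comap (algebraMap R B)
          (comap (algebraMap B B') x)) := by
      rw [← comap_comp_apply, ← comap_comp_apply, ← IsScalarTower.algebraMap_eq,
        ← IsScalarTower.algebraMap_eq]
    rw [hcomp, hcomp, le_iff_specializes,
      (localization_comap_isEmbedding R M).isInducing.specializes_iff,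
      ← le_iff_specializes] at h
    rw [le_iff_specializes, ← hi.isInducing.specializes_iff, ← le_iff_specializes]
    by_contra hlt
    have hPQ' : comap (algebraMap B B') P ≤ comap (algebraMap B B') Q := Ideal.comap_mono hPQ
    exact (Ideal.IsIntegral.comap_lt_comap (R := R) (lt_of_le_not_ge hPQ' hlt)).not_ge h

lemma PrimeSpectrum.exists_fibreDimFormula_of_isDomain (A B : Type*) [CommRing A] [IsDomain A]
    [IsNoetherianRing A] [CommRing B] [IsDomain B] [Algebra A B] [FaithfulSMul A B]
    [Algebra.FiniteType A B] :
    ∃ U : Set (PrimeSpectrum B), IsOpen U ∧ U.Nonempty ∧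
      ∀ x ∈ U, FibreDimFormula (comap (algebraMap A B)) x := by
  obtain ⟨n, x, hx, halg⟩ := exists_isAlgebraic_mvPolynomial A B
  let : Algebra (MvPolynomial (Fin n) A) B := (MvPolynomial.aeval (R := A) x).toAlgebra
  have : IsScalarTower A (MvPolynomial (Fin n) A) B :=
    .of_algebraMap_eq fun a ↦ ((MvPolynomial.aeval x).commutes a).symm
  have hSB : Function.Injective (algebraMap (MvPolynomial (Fin n) A) B) := hx
  have : Algebra.FiniteType (MvPolynomial (Fin n) A) B := .of_restrictScalars_finiteType A _ B
  obtain ⟨s, hs, hfin⟩ := exists_finite_localization (MvPolynomial (Fin n) A) B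
  have hsB : algebraMap (MvPolynomial (Fin n) A) B s ≠ 0 := by simpa using hSB.ne hs
  set M := Submonoid.powers s
  set N := Algebra.algebraMapSubmonoid B M with hN
  have hM : M ≤ nonZeroDivisors _ := powers_le_nonZeroDivisors_of_noZeroDivisors hs
  rw [Algebra.algebraMapSubmonoid_powers] at hN
  have hN' : N ≤ nonZeroDivisors B := hN ▸ powers_le_nonZeroDivisors_of_noZeroDivisors hsB
  have : IsDomain (Localization M) := IsLocalization.isDomain_localization hM
  have : IsDomain (Localization N) := IsLocalization.isDomain_localization hN'
  have : IsLocalization.Away (algebraMap _ B s) (Localization N) := by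
    rw [IsLocalization.Away, ← hN]
    infer_instance
  have : Algebra.FiniteType B (Localization N) := by
    have := IsLocalization.Away.finitePresentation (S := Localization N) (algebraMap _ B s)
    infer_instance
  have : Algebra.FiniteType (MvPolynomial (Fin n) A) (Localization N) :=
    .trans (S := B) inferInstance inferInstance
  have : FaithfulSMul (Localization M) (Localization N) := by
    rw [faithfulSMul_iff_algebraMap_injective]
    exact localizationAlgebra_injective (M := M) (Localization M) (Localization N) hSB
  obtain ⟨U, hU, hne, H⟩ :=
    exists_fibreDimFormula_of_finite_localization (A := A) (R := Localization M)
      (B := Localization N) M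
  have hi : IsOpenEmbedding (comap (algebraMap B (Localization N))) :=
    localization_away_isOpenEmbedding _ (algebraMap _ B s)
  refine ⟨_, hi.isOpenMap _ hU, hne.image _, ?_⟩
  rintro _ ⟨z, hz, rfl⟩
  refine .of_isOpenEmbedding hi .id (fun z ↦ ?_) (H z hz)
  rw [← comap_comp_apply, ← IsScalarTower.algebraMap_eq, id]

lemma PrimeSpectrum.isOpenEmbedding_comap_mk_nilradical (R : Type*) [CommRing R] :
    IsOpenEmbedding (comap (Ideal.Quotient.mk (nilradical R))) := by
  have h := isClosedEmbedding_comap_of_surjective _ (Ideal.Quotient.mk (nilradical R))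
    Ideal.Quotient.mk_surjective
  refine ⟨h.isEmbedding, ?_⟩
  rw [range_comap_of_surjective _ _ Ideal.Quotient.mk_surjective, Ideal.mk_ker, nilradical,
    zeroLocus_radical]
  simp

lemma PrimeSpectrum.exists_fibreDimFormula {A B : Type*} [CommRing A] [IsNoetherianRing A]
    [CommRing B] (φ : A →+* B) (hφ : φ.FiniteType) [IrreducibleSpace (PrimeSpectrum A)]
    [IrreducibleSpace (PrimeSpectrum B)] (hker : RingHom.ker φ ≤ nilradical A) :
    ∃ U : Set (PrimeSpectrum B), IsOpen U ∧ U.Nonempty ∧ ∀ x ∈ U, FibreDimFormula (comap φ) x := by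
  have hA : (nilradical A).IsPrime := irreducibleSpace_iff_isPrime_nilradical.mp inferInstance
  have hB : (nilradical B).IsPrime := irreducibleSpace_iff_isPrime_nilradical.mp inferInstance
  have hle : nilradical A ≤ (nilradical B).comap φ := fun a ha ↦ IsNilpotent.map ha φ
  have hge : (nilradical B).comap φ ≤ nilradical A := by
    rintro a ⟨n, hn⟩
    rw [← map_pow] at hn
    obtain ⟨m, hm⟩ := hker hn
    exact ⟨n * m, by rwa [pow_mul]⟩
  let ψ : A ⧸ nilradical A →+* B ⧸ nilradical B := Ideal.quotientMap _ φ hle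
  have hψ : ψ.FiniteType := by
    refine RingHom.FiniteType.of_comp_finiteType (f := Ideal.Quotient.mk _) ?_
    rw [Ideal.quotientMap_comp_mk]
    exact hφ.comp_surjective Ideal.Quotient.mk_surjective
  let := ψ.toAlgebra
  have : FaithfulSMul (A ⧸ nilradical A) (B ⧸ nilradical B) :=
    (faithfulSMul_iff_algebraMap_injective _ _).mpr (Ideal.quotientMap_injective' hge)
  have : Algebra.FiniteType (A ⧸ nilradical A) (B ⧸ nilradical B) := hψ
  obtain ⟨U, hU, hne, H⟩ :=
    exists_fibreDimFormula_of_isDomain (A ⧸ nilradical A) (B ⧸ nilradical B)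
  have hi := isOpenEmbedding_comap_mk_nilradical B
  refine ⟨_, hi.isOpenMap _ hU, hne.image _, ?_⟩
  rintro _ ⟨z, hz, rfl⟩
  refine .of_isOpenEmbedding hi (isOpenEmbedding_comap_mk_nilradical A) (fun z ↦ ?_) (H z hz)
  rw [← comap_comp_apply, ← comap_comp_apply, RingHom.algebraMap_toAlgebra,
    Ideal.quotientMap_comp_mk]

end Spec

theorem exists_open_fibre_dim_formula (W V : Scheme.{u}) (f : W ⟶ V)
    [IrreducibleSpace W] [IrreducibleSpace V]
    [IsLocallyNoetherian W] [IsLocallyNoetherian V] [LocallyOfFiniteType f]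
    (hdom : SchemeTheoreticallyDominant f) :
    ∃ U : Set W, IsOpen U ∧ U.Nonempty ∧ ∀ w ∈ U,
      localDim ↥(f.base ⁻¹' {f.base w} : Set W) ⟨w, rfl⟩ + localDim V (f.base w) =
        localDim W w := by
  have hdense (U : V.Opens) (hU : (U : Set V).Nonempty) : (f ⁻¹ᵁ U : Set W).Nonempty := by
    by_contra h
    have hbot : f ⁻¹ᵁ U = ⊥ := by
      ext1
      simpa [Set.not_nonempty_iff_eq_empty] using h
    have : Nonempty U := hU.to_subtype
    have h1 : Subsingleton Γ(W, f ⁻¹ᵁ U) := hbot ▸ inferInstance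
    exact not_subsingleton _ (hdom U).subsingleton
  obtain ⟨v⟩ : Nonempty V := inferInstance
  obtain ⟨V₀, hV₀, hv, -⟩ := exists_isAffineOpen_mem_and_subset (U := ⊤) (Opens.mem_top v)
  obtain ⟨w, hw⟩ := hdense V₀ ⟨v, hv⟩
  obtain ⟨W₀, hW₀, hw₀, hle⟩ := exists_isAffineOpen_mem_and_subset hw
  have : IsNoetherianRing Γ(V, V₀) := IsLocallyNoetherian.component_noetherian ⟨V₀, hV₀⟩
  let j : PrimeSpectrum Γ(V, V₀) → V := hV₀.fromSpec
  let i : PrimeSpectrum Γ(W, W₀) → W := hW₀.fromSpec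
  have hj : Topology.IsOpenEmbedding j := hV₀.fromSpec.isOpenEmbedding
  have hi : Topology.IsOpenEmbedding i := hW₀.fromSpec.isOpenEmbedding
  have hsq (x) : f (i x) = j (PrimeSpectrum.comap (f.appLE V₀ W₀ hle).hom x) :=
    congr($(hV₀.SpecMap_appLE_fromSpec f hW₀ hle) x).symm
  have : IrreducibleSpace (PrimeSpectrum Γ(V, V₀)) :=
    have : Nonempty (PrimeSpectrum Γ(V, V₀)) := ⟨hV₀.primeIdealOf ⟨v, hv⟩⟩
    hj.irreducibleSpace
  have : IrreducibleSpace (PrimeSpectrum Γ(W, W₀)) :=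
    have : Nonempty (PrimeSpectrum Γ(W, W₀)) := ⟨hW₀.primeIdealOf ⟨w, hw₀⟩⟩
    hi.irreducibleSpace
  have hdr : DenseRange (PrimeSpectrum.comap (f.appLE V₀ W₀ hle).hom) := by
    rw [DenseRange, dense_iff_inter_open]
    intro O hO hne
    obtain ⟨_, h₁, h₂⟩ := nonempty_preirreducible_inter
      (f ⁻¹ᵁ ⟨j '' O, hj.isOpenMap _ hO⟩).isOpen hi.isOpen_range
      (hdense ⟨_, hj.isOpenMap _ hO⟩ (hne.image _)) (Set.range_nonempty _)
    obtain ⟨x, rfl⟩ := h₂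
    obtain ⟨y, hy, hyx⟩ := h₁
    rw [hsq] at hyx
    exact ⟨_, hj.injective hyx ▸ hy, x, rfl⟩
  obtain ⟨U, hU, hne, H⟩ := PrimeSpectrum.exists_fibreDimFormula (f.appLE V₀ W₀ hle).hom
    (f.finiteType_appLE hV₀ hW₀ hle)
    ((PrimeSpectrum.denseRange_comap_iff_ker_le_nilRadical _).mp hdr)
  refine ⟨_, hi.isOpenMap _ hU, hne.image _, ?_⟩
  rintro _ ⟨z, hz, rfl⟩
  exact FibreDimFormula.of_isOpenEmbedding (f := f) hi hj hsq (H z hz)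
end
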